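/- Let f be a canonical admissible 6-tuple. Then: (i) f is minimal if and only if δ(ψ₁^i(f))≥0 for i=0,1,2; (ii) f is a root if and only if, for each i∈{0,1,2}, δ(ψ₁^i(f))>0 whenever σ(ψ₁^i(f)) is not H-equivalent to f. -/

import Mathlib

/-!
Common setup: 6-tuples, the coloured graph Γ(f), conditions (I)–(VI),
the maps ψ₁, ψ₂, ψ₃, σ, equivalences, traps, canonical/minimal/root tuples.
-/

namespace GMN

/-- A 6-tuple `(h₀,h₁,h₂;q₀,q₁,q₂)` of integers. -/
structure Tuple where
  h0 : ℤ
  h1 : ℤ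
  h2 : ℤ
  q0 : ℤ
  q1 : ℤ
  q2 : ℤ

namespace Tuple

/-- The `h`-components indexed by `ℤ₃`. -/
def h (f : Tuple) : ZMod 3 → ℤ := fun i => if i = 0 then f.h0 else if i = 1 then f.h1 else f.h2

/-- The `q`-components indexed by `ℤ₃`. -/
def q (f : Tuple) : ZMod 3 → ℤ := fun i => if i = 0 then f.q0 else if i = 1 then f.q1 else f.q2

/-- `2lᵢ = h_{i-1} + hᵢ`. -/
def twol (f : Tuple) (i : ZMod 3) : ℤ := f.h (i - 1) + f.h i

end Tuple

/-- Condition (I): all `hᵢ` positive. -/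
def CondI (f : Tuple) : Prop := ∀ i, 0 < f.h i

/-- Condition (II): all `hᵢ` of the same parity. -/
def CondII (f : Tuple) : Prop := ∀ i j, f.h i % 2 = f.h j % 2

/-- Condition (III): `0 ≤ qᵢ < 2lᵢ`. -/
def CondIII (f : Tuple) : Prop := ∀ i, 0 ≤ f.q i ∧ f.q i < f.twol i

/-- Condition (IV): all `qᵢ` of the same parity. -/
def CondIV (f : Tuple) : Prop := ∀ i j, f.q i % 2 = f.q j % 2

/-- Conditions (I)–(IV) together. -/
def CondsI_IV (f : Tuple) : Prop := CondI f ∧ CondII f ∧ CondIII f ∧ CondIV f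

/-- Condition (V): `hᵢ + qᵢ` odd. -/
def CondV (f : Tuple) : Prop := ∀ i, (f.h i + f.q i) % 2 = 1

/-- The vertex set `V(f) = ⋃ᵢ {i} × ℤ_{2lᵢ}`, with second coordinates as least
nonnegative residues. -/
def Vtx (f : Tuple) : Set (ZMod 3 × ℤ) := {p | 0 ≤ p.2 ∧ p.2 < f.twol p.1}

/-- `ι₀(i,j) = (i, j + (−1)^j)`, second coordinate mod `2lᵢ`. -/
def iota0 (f : Tuple) (p : ZMod 3 × ℤ) : ZMod 3 × ℤ :=
  (p.1, (if p.2 % 2 = 0 then p.2 + 1 else p.2 - 1) % f.twol p.1)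

/-- `ι₁(i,j) = (i, j − (−1)^j)`, second coordinate mod `2lᵢ`. -/
def iota1 (f : Tuple) (p : ZMod 3 × ℤ) : ZMod 3 × ℤ :=
  (p.1, (if p.2 % 2 = 0 then p.2 - 1 else p.2 + 1) % f.twol p.1)

/-- `ι₂(i,j) = (i+1, −j−1)` if `0 ≤ j ≤ hᵢ−1`, and `(i−1, 2lᵢ−j−1)` if `hᵢ ≤ j ≤ 2lᵢ−1`. -/
def iota2 (f : Tuple) (p : ZMod 3 × ℤ) : ZMod 3 × ℤ :=
  if p.2 < f.h p.1 then (p.1 + 1, (-p.2 - 1) % f.twol (p.1 + 1))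
  else (p.1 - 1, (f.twol p.1 - p.2 - 1) % f.twol (p.1 - 1))

/-- `ρ(i,j) = (i, j + qᵢ)`. -/
def rho (f : Tuple) (p : ZMod 3 × ℤ) : ZMod 3 × ℤ :=
  (p.1, (p.2 + f.q p.1) % f.twol p.1)

/-- `ρ⁻¹(i,j) = (i, j − qᵢ)`. -/
def rhoInv (f : Tuple) (p : ZMod 3 × ℤ) : ZMod 3 × ℤ :=
  (p.1, (p.2 - f.q p.1) % f.twol p.1)

/-- `ι₃ = ρ ∘ ι₂ ∘ ρ⁻¹`. -/
def iota3 (f : Tuple) : ZMod 3 × ℤ → ZMod 3 × ℤ :=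
  rho f ∘ iota2 f ∘ rhoInv f

/-- The four involutions of `Γ(f)`, indexed by the colour `c ∈ {0,1,2,3}`. -/
def iota (f : Tuple) : Fin 4 → ZMod 3 × ℤ → ZMod 3 × ℤ
  | 0 => iota0 f
  | 1 => iota1 f
  | 2 => iota2 f
  | 3 => iota3 f

/-- One step along an edge of `Γ(f)` whose colour lies in `S`, within `V(f)`. -/
def Step (f : Tuple) (S : Set (Fin 4)) (a b : ZMod 3 × ℤ) : Prop :=
  a ∈ Vtx f ∧ b ∈ Vtx f ∧ ∃ c ∈ S, b = iota f c a

/-- The orbit relation on `V(f)` of the subgroup generated by the involutions with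
colours in `S` (the `S`-residue relation). -/
def OrbRel (f : Tuple) (S : Set (Fin 4)) : ZMod 3 × ℤ → ZMod 3 × ℤ → Prop :=
  Relation.EqvGen (Step f S)

/-- The subgroup generated by the colours in `S` has exactly three orbits on `V(f)`. -/
def ThreeOrbits (f : Tuple) (S : Set (Fin 4)) : Prop :=
  ∃ a b c, a ∈ Vtx f ∧ b ∈ Vtx f ∧ c ∈ Vtx f ∧
    ¬ OrbRel f S a b ∧ ¬ OrbRel f S a c ∧ ¬ OrbRel f S b c ∧
    ∀ v ∈ Vtx f, OrbRel f S a v ∨ OrbRel f S b v ∨ OrbRel f S c v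

/-- Admissibility: conditions (I)–(IV), (V), and (VI) (three `{2,3}`-residues). -/
def Admissible (f : Tuple) : Prop :=
  CondsI_IV f ∧ CondV f ∧ ThreeOrbits f {2, 3}

/-- `ψ₁(h₀,h₁,h₂;q₀,q₁,q₂) = (h₁,h₂,h₀;q₁,q₂,q₀)`. -/
def psi1 (f : Tuple) : Tuple := ⟨f.h1, f.h2, f.h0, f.q1, f.q2, f.q0⟩

/-- `ψ₂(h₀,h₁,h₂;q₀,q₁,q₂) = (h₂,h₁,h₀;q₀,q₂,q₁)`. -/
def psi2 (f : Tuple) : Tuple := ⟨f.h2, f.h1, f.h0, f.q0, f.q2, f.q1⟩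

/-- `ψ₃(h₀,h₁,h₂;q₀,q₁,q₂) = (h₀,h₁,h₂;−q₀,−q₁,−q₂)`, the `q`-entries reduced to their
least nonnegative residues mod the respective `2lᵢ`. -/
def psi3 (f : Tuple) : Tuple :=
  ⟨f.h0, f.h1, f.h2,
    (-f.q0) % (f.h2 + f.h0), (-f.q1) % (f.h0 + f.h1), (-f.q2) % (f.h1 + f.h2)⟩

/-- The 2-symmetric transformation `σ`, with the `q′`-entries reduced to their least
nonnegative residues mod the respective `2lᵢ′ = h′_{i−1} + h′ᵢ`. -/
def sigma (f : Tuple) : Tuple :=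
  if f.q0 = 0 then f
  else if f.q0 < f.h0 ∧ f.q0 < f.h2 then
    ⟨f.h0 + f.h1 - f.q0, f.q0, f.h2 + f.h1 - f.q0,
      (f.h0 + f.h1 + f.h2 - 2 * f.q0) % ((f.h2 + f.h1 - f.q0) + (f.h0 + f.h1 - f.q0)),
      (f.q0 + f.q1 + f.h1) % ((f.h0 + f.h1 - f.q0) + f.q0),
      (f.q0 + f.q2 + f.h1) % (f.q0 + (f.h2 + f.h1 - f.q0))⟩
  else if f.h0 < f.q0 ∧ f.h2 < f.q0 then
    ⟨f.q0 + f.h1 - f.h2, f.h0 + f.h2 - f.q0, f.q0 + f.h1 - f.h0,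
      f.h1 % ((f.q0 + f.h1 - f.h0) + (f.q0 + f.h1 - f.h2)),
      (f.q0 + f.q1 - f.h2) % ((f.q0 + f.h1 - f.h2) + (f.h0 + f.h2 - f.q0)),
      (f.q0 + f.q2 - f.h0) % ((f.h0 + f.h2 - f.q0) + (f.q0 + f.h1 - f.h0))⟩
  else if f.q0 < f.h2 then
    ⟨f.h1, f.h0, f.h1 + f.h2 - f.h0,
      (f.h1 + f.h2 - f.q0) % ((f.h1 + f.h2 - f.h0) + f.h1),
      f.q1 % (f.h1 + f.h0),
      (2 * f.q0 + f.q2 + f.h1 - f.h0) % (f.h0 + (f.h1 + f.h2 - f.h0))⟩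
  else
    ⟨f.h1 + f.h0 - f.h2, f.h2, f.h1,
      (f.h1 + f.h0 - f.q0) % (f.h1 + (f.h1 + f.h0 - f.h2)),
      (2 * f.q0 + f.q1 + f.h1 - f.h2) % ((f.h1 + f.h0 - f.h2) + f.h2),
      f.q2 % (f.h2 + f.h1)⟩

/-- The complexity `ν(f) = h₀ + h₁ + h₂`. -/
def nu (f : Tuple) : ℤ := f.h0 + f.h1 + f.h2

/-- `δ(f) = ν(σ(f)) − ν(f)`. -/
def delta (f : Tuple) : ℤ := nu (sigma f) - nu f

/-- One step of the action of a generator of `H` on admissible 6-tuples. -/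
def HStep (a b : Tuple) : Prop :=
  Admissible a ∧ Admissible b ∧ (b = psi1 a ∨ b = psi2 a ∨ b = psi3 a)

/-- `H`-equivalence: the orbit relation of `H = ⟨ψ₁,ψ₂,ψ₃⟩` on `ℱ`. -/
def HEquiv : Tuple → Tuple → Prop := Relation.EqvGen HStep

/-- One step of the action of a generator of `H′` on admissible 6-tuples. -/
def H'Step (a b : Tuple) : Prop :=
  Admissible a ∧ Admissible b ∧ (b = psi2 a ∨ b = psi3 a)

/-- `H′`-equivalence: the orbit relation of `H′ = ⟨ψ₂,ψ₃⟩` on `ℱ`. -/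
def H'Equiv : Tuple → Tuple → Prop := Relation.EqvGen H'Step

/-- One step of the action of a generator of `G` on admissible 6-tuples. -/
def GStep (a b : Tuple) : Prop :=
  Admissible a ∧ Admissible b ∧ (b = psi1 a ∨ b = psi2 a ∨ b = psi3 a ∨ b = sigma a)

/-- `G`-equivalence: the orbit relation of `G = ⟨ψ₁,ψ₂,ψ₃,σ⟩` on `ℱ`. -/
def GEquiv : Tuple → Tuple → Prop := Relation.EqvGen GStep

/-- Membership in the set `{0, r+1, r+2, …, s−1}`. -/
def inT (r s x : ℤ) : Prop := x = 0 ∨ (r < x ∧ x < s)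

/-- A trap of type `(r,s)`: `H`-equivalent to an admissible `(r,r,s;q₀,0,q₂)` with
`q₀+k(q₀+q₂), q₂+k(q₀+q₂) ∈ {0,r+1,…,s−1} (mod r+s)` for all `k ≥ 0`. -/
def IsTrapOfType (r s : ℤ) (f : Tuple) : Prop :=
  ∃ g : Tuple, Admissible g ∧ HEquiv f g ∧
    g.h0 = r ∧ g.h1 = r ∧ g.h2 = s ∧ g.q1 = 0 ∧
    ∀ k : ℕ, inT r s ((g.q0 + (k : ℤ) * (g.q0 + g.q2)) % (r + s)) ∧
             inT r s ((g.q2 + (k : ℤ) * (g.q0 + g.q2)) % (r + s))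

/-- A trap: a trap of some type `(r,s)` with `0 < r ≤ s`. -/
def IsTrap (f : Tuple) : Prop := ∃ r s : ℤ, 0 < r ∧ r ≤ s ∧ IsTrapOfType r s f

/-- The canonical representative conditions (a)–(i) (together with admissibility). -/
def Canonical (f : Tuple) : Prop :=
  Admissible f ∧
  (f.h0 ≤ f.h1 ∧ f.h1 ≤ f.h2) ∧
  (2 * f.q0 ≤ f.h2 + f.h0) ∧
  ((f.q0 = 0 ∨ 2 * f.q0 = f.h2 + f.h0) → 2 * f.q1 ≤ f.h0 + f.h1) ∧
  ((f.q0 = 0 ∨ 2 * f.q0 = f.h2 + f.h0) → (f.q1 = 0 ∨ 2 * f.q1 = f.h0 + f.h1) →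
    2 * f.q2 ≤ f.h1 + f.h2) ∧
  (f.h0 = f.h1 → f.q0 ≤ f.q2 ∧ f.q2 ≤ (-f.q0) % (f.h2 + f.h0)) ∧
  (f.h0 = f.h1 → (f.q2 = f.q0 ∨ f.q2 = (-f.q0) % (f.h2 + f.h0)) → f.q1 ≤ f.h1) ∧
  (f.h1 = f.h2 → f.q0 ≤ f.q1 ∧ f.q1 ≤ (-f.q0) % (f.h2 + f.h0)) ∧
  (f.h1 = f.h2 → (f.q1 = f.q0 ∨ f.q1 = (-f.q0) % (f.h2 + f.h0)) → f.q2 ≤ f.h2) ∧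
  (f.h0 = f.h1 ∧ f.h1 = f.h2 → f.q1 ≤ f.q2)

/-- A canonical 6-tuple is minimal if its complexity is minimal in its `G`-orbit. -/
def Minimal (f : Tuple) : Prop :=
  Canonical f ∧ ∀ g, GEquiv f g → nu f ≤ nu g

/-- A canonical 6-tuple is a root if every `G`-equivalent but not `H`-equivalent
6-tuple has strictly larger complexity. -/
def Root (f : Tuple) : Prop :=
  Canonical f ∧ ∀ g, GEquiv f g → ¬ HEquiv f g → nu f < nu g

/-- A colour-preserving isomorphism between `Γ(f)` and `Γ(f′)`. -/
def CPIso (f f' : Tuple) : Prop :=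
  ∃ φ : ZMod 3 × ℤ → ZMod 3 × ℤ, Set.BijOn φ (Vtx f) (Vtx f') ∧
    ∀ c : Fin 4, ∀ v ∈ Vtx f, φ (iota f c v) = iota f' c (φ v)

/-- The set of admissible 6-tuples, as a type. -/
abbrev AdmTuple := {f : Tuple // Admissible f}

/-!
The involution `σ` joins the `H`-classes of admissible tuples into a graph whose components are the
`G`-orbits. That `σ` preserves admissibility comes from its effect on the labellings of the
`{2, 3}`-residues: a labelling is determined by its restrictions to the circles `1` and `2`, and up
to a rotation of one circle and a reflection of the other these satisfy the same conditions for `f`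
as for `σ(f)`.

If `q₀ ≠ 0`, then `δ(f) = h₁ - min (min q₀ (2l₀ - q₀)) (min h₀ h₂)`. Hence `δ(f) < 0` forces
`h₁ < h₀` and `h₁ < h₂`, and then `σ` fixes each of the two other rotations of `f` or strictly
increases its complexity. So a class with a descending edge has no other non-ascending edge, and
the complexity, once it has not decreased along an edge of a path, never decreases afterwards: local
minima are global.
-/

/-! ### Functions on graphs with unique descents -/

section UniqueDescent

variable {V α : Type*} [LinearOrder α] {G : SimpleGraph V} {ν : V → α} {u v w : V}

/-- A discrete Morse condition on a vertex function: a vertex with a strictly descending edge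
has no other non-ascending edge. It makes local minima global. -/
def HasUniqueDescent (G : SimpleGraph V) (ν : V → α) : Prop :=
  ∀ ⦃x y z⦄, G.Adj x y → G.Adj x z → ν y < ν x → ν z ≤ ν x → y = z

theorem HasUniqueDescent.le_of_isPath (hν : HasUniqueDescent G ν) (huv : G.Adj u v)
    (p : G.Walk v w) (hp : (p.cons huv).IsPath) (h : ν u ≤ ν v) : ν v ≤ ν w := by
  induction p generalizing u with
  | nil => exact le_rfl
  | @cons v x w hvx p ih =>
    have hux : x ≠ u := by
      rintro rfl
      exact (SimpleGraph.Walk.cons_isPath_iff _ _).1 hp |>.2 (by simp)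
    have hle : ν v ≤ ν x := by
      by_contra! hlt
      exact hux (hν hvx huv.symm hlt h)
    exact hle.trans (ih hvx hp.of_cons hle)

theorem HasUniqueDescent.le_of_reachable (hν : HasUniqueDescent G ν)
    (hu : ∀ v, G.Adj u v → ν u ≤ ν v) (huw : G.Reachable u w) : ν u ≤ ν w := by
  obtain ⟨p, hp⟩ := huw.exists_isPath
  cases p with
  | nil => exact le_rfl
  | cons huv p => exact (hu _ huv).trans (hν.le_of_isPath huv p hp (hu _ huv))

theorem HasUniqueDescent.lt_of_reachable (hν : HasUniqueDescent G ν)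
    (hu : ∀ v, G.Adj u v → ν u < ν v) (huw : G.Reachable u w) (hne : u ≠ w) : ν u < ν w := by
  obtain ⟨p, hp⟩ := huw.exists_isPath
  cases p with
  | nil => exact absurd rfl hne
  | cons huv p => exact (hu _ huv).trans_le (hν.le_of_isPath huv p hp (hu _ huv).le)

end UniqueDescent

/-! ### The numerical conditions -/

theorem forall_zmod_three {P : ZMod 3 → Prop} : (∀ i, P i) ↔ P 0 ∧ P 1 ∧ P 2 :=
  Fin.forall_fin_succ.trans (and_congr_right' Fin.forall_fin_two)

namespace Tuple

variable (f : Tuple)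

@[simp] theorem h_zero : f.h 0 = f.h0 := rfl
@[simp] theorem h_one : f.h 1 = f.h1 := rfl
@[simp] theorem h_two : f.h 2 = f.h2 := rfl
@[simp] theorem q_zero : f.q 0 = f.q0 := rfl
@[simp] theorem q_one : f.q 1 = f.q1 := rfl
@[simp] theorem q_two : f.q 2 = f.q2 := rfl
@[simp] theorem twol_zero : f.twol 0 = f.h2 + f.h0 := rfl

end Tuple

/-- Conditions (I), (II) and (V), the numerical conditions that do not require the `q`-entries
to be least residues. -/
def CondsI_II_V (f : Tuple) : Prop := CondI f ∧ CondII f ∧ CondV f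

/-- Conditions (I)–(V); condition (IV) is a consequence of (II) and (V). -/
def CondsI_V (f : Tuple) : Prop := CondsI_II_V f ∧ CondIII f

theorem condsI_II_V_iff {f : Tuple} : CondsI_II_V f ↔
    (0 < f.h0 ∧ 0 < f.h1 ∧ 0 < f.h2) ∧ (f.h1 % 2 = f.h0 % 2 ∧ f.h2 % 2 = f.h0 % 2) ∧
      (f.h0 + f.q0) % 2 = 1 ∧ (f.h1 + f.q1) % 2 = 1 ∧ (f.h2 + f.q2) % 2 = 1 := by
  simp only [CondsI_II_V, CondI, CondII, CondV, forall_zmod_three, Tuple.h_zero, Tuple.h_one,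
    Tuple.h_two, Tuple.q_zero, Tuple.q_one, Tuple.q_two, true_and, and_true]
  omega

theorem condIII_iff {f : Tuple} : CondIII f ↔
    (0 ≤ f.q0 ∧ f.q0 < f.h2 + f.h0) ∧ (0 ≤ f.q1 ∧ f.q1 < f.h0 + f.h1) ∧
      (0 ≤ f.q2 ∧ f.q2 < f.h1 + f.h2) :=
  forall_zmod_three

theorem CondsI_V.condI {f : Tuple} (hf : CondsI_V f) : CondI f := hf.1.1

theorem admissible_iff {f : Tuple} : Admissible f ↔ CondsI_V f ∧ ThreeOrbits f {2, 3} := by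
  have hIV : CondII f → CondV f → CondIV f := fun h2 h5 i j => by
    have := h2 i j
    have := h5 i
    have := h5 j
    omega
  unfold Admissible CondsI_IV CondsI_V CondsI_II_V
  tauto

theorem twol_pos {f : Tuple} (hf : CondI f) (i : ZMod 3) : 0 < f.twol i := add_pos (hf _) (hf _)

/-! ### Reduction of the `q`-entries -/

/-- The tuple with the same `h`-entries whose `q`-entries are the least nonnegative residues. -/
def reduce (f : Tuple) : Tuple :=
  ⟨f.h0, f.h1, f.h2, f.q0 % (f.h2 + f.h0), f.q1 % (f.h0 + f.h1), f.q2 % (f.h1 + f.h2)⟩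

theorem q_reduce (f : Tuple) (i : ZMod 3) : (reduce f).q i = f.q i % f.twol i := by
  revert i
  exact forall_zmod_three.2 ⟨rfl, rfl, rfl⟩

theorem condIII_reduce {f : Tuple} (hf : CondI f) : CondIII (reduce f) := fun i => by
  rw [q_reduce]
  exact ⟨Int.emod_nonneg _ (twol_pos hf i).ne', Int.emod_lt_of_pos _ (twol_pos hf i)⟩

theorem CondsI_II_V.reduce {f : Tuple} (hf : CondsI_II_V f) : CondsI_V (reduce f) := by
  refine ⟨⟨hf.1, hf.2.1, fun i => ?_⟩, condIII_reduce hf.1⟩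
  have heven : 2 ∣ f.twol i := by
    have := hf.2.1 (i - 1) i
    unfold Tuple.twol
    omega
  have hodd : (f.h i + f.q i) % 2 = 1 := hf.2.2 i
  have := Int.emod_emod_of_dvd (f.q i) heven
  change (f.h i + (GMN.reduce f).q i) % 2 = 1
  rw [q_reduce]
  omega

theorem reduce_eq_self {f : Tuple} (hf : CondIII f) : reduce f = f := by
  obtain ⟨⟨h0, h0'⟩, ⟨h1, h1'⟩, h2, h2'⟩ := condIII_iff.1 hf
  simp only [reduce, Int.emod_eq_of_lt, *]

theorem reduce_congr {f g : Tuple} (h0 : f.h0 = g.h0) (h1 : f.h1 = g.h1) (h2 : f.h2 = g.h2)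
    (q0 : g.h2 + g.h0 ∣ f.q0 - g.q0) (q1 : g.h0 + g.h1 ∣ f.q1 - g.q1)
    (q2 : g.h1 + g.h2 ∣ f.q2 - g.q2) : reduce f = reduce g := by
  simp only [reduce, h0, h1, h2, Tuple.mk.injEq, true_and]
  exact ⟨(Int.modEq_iff_dvd.2 q0).symm, (Int.modEq_iff_dvd.2 q1).symm,
    (Int.modEq_iff_dvd.2 q2).symm⟩

/-! ### Labellings of the `{2, 3}`-residues -/

section Labelling

variable {X : Type*} {f g : Tuple} {c : ZMod 3 → ℤ → X}

/-- A labelling of the three circles of vertices, lifted to periodic functions on `ℤ`, which is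
constant on the `{2, 3}`-residues: `front` is invariance under `ι₂`, and `back` under `ι₃`. -/
structure IsLabelling (f : Tuple) (c : ZMod 3 → ℤ → X) : Prop where
  periodic : ∀ i, Function.Periodic (c i) (f.twol i)
  front : ∀ i j, 0 ≤ j → j < f.h i → c i j = c (i + 1) (-j - 1)
  back : ∀ i j, 0 ≤ j → j < f.h i → c i (j + f.q i) = c (i + 1) (-j - 1 + f.q (i + 1))

/-- The `{2, 3}`-residues of `f` can be labelled by `X` so that every label is used. -/
def HasLabelling (X : Type*) (f : Tuple) : Prop :=
  ∃ c : ZMod 3 → ℤ → X, IsLabelling f c ∧ ∀ x, ∃ i j, c i j = x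

theorem periodic_eq {a : ℤ → X} {n x y : ℤ} (ha : Function.Periodic a n) (h : n ∣ x - y) :
    a x = a y := by
  obtain ⟨m, hm⟩ := h
  rw [← ha.int_mul m y, Int.cast_id, mul_comm, ← hm, add_sub_cancel]

theorem periodic_emod {a : ℤ → X} {n : ℤ} (ha : Function.Periodic a n) (x : ℤ) :
    a (x % n) = a x :=
  periodic_eq ha (Int.dvd_sub_self_of_emod_eq rfl)

theorem periodic_emod_add {a : ℤ → X} {n : ℤ} (ha : Function.Periodic a n) (x y : ℤ) :
    a (x % n + y) = a (x + y) := by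
  rw [← periodic_emod ha, Int.emod_add_emod, periodic_emod ha]

theorem periodic_add_emod {a : ℤ → X} {n : ℤ} (ha : Function.Periodic a n) (x y : ℤ) :
    a (x + y % n) = a (x + y) := by
  rw [← periodic_emod ha, Int.add_emod_emod, periodic_emod ha]

theorem emod_mem_vtx (hf : CondI f) (i : ZMod 3) (j : ℤ) : (i, j % f.twol i) ∈ Vtx f :=
  ⟨Int.emod_nonneg _ (twol_pos hf i).ne', Int.emod_lt_of_pos _ (twol_pos hf i)⟩

theorem apply_iota2 (hper : ∀ i, Function.Periodic (c i) (f.twol i))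
    (hfront : ∀ i j, 0 ≤ j → j < f.h i → c i j = c (i + 1) (-j - 1)) {p : ZMod 3 × ℤ}
    (hp : p ∈ Vtx f) : c (iota2 f p).1 (iota2 f p).2 = c p.1 p.2 := by
  obtain ⟨i, j⟩ := p
  obtain ⟨hj, hj'⟩ : 0 ≤ j ∧ j < f.h (i - 1) + f.h i := hp
  simp only [iota2]
  split_ifs with h
  · rw [periodic_emod (hper _), ← hfront i j hj h]
  · rw [periodic_emod (hper _), Tuple.twol, hfront (i - 1) _ (by omega) (by omega),
      sub_add_cancel]
    exact periodic_eq (hper i) ⟨-1, by rw [Tuple.twol]; ring⟩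

theorem IsLabelling.apply_iota3 (hc : IsLabelling f c) (hf : CondI f) (p : ZMod 3 × ℤ) :
    c (iota3 f p).1 (iota3 f p).2 = c p.1 p.2 := by
  have hshift : ∀ i, Function.Periodic (fun j => c i (j + f.q i)) (f.twol i) := fun i =>
    Function.Periodic.add_const (hc.periodic i) _
  have key := apply_iota2 hshift hc.back (emod_mem_vtx hf p.1 (p.2 - f.q p.1))
  simpa only [iota3, rho, rhoInv, Function.comp_apply, periodic_emod (hc.periodic _),
    periodic_emod_add (hc.periodic _), sub_add_cancel] using key

theorem IsLabelling.eq_of_orbRel (hc : IsLabelling f c) (hf : CondI f) {p p' : ZMod 3 × ℤ}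
    (hp : OrbRel f {2, 3} p p') : c p.1 p.2 = c p'.1 p'.2 := by
  induction hp with
  | rel _ _ h =>
    obtain ⟨hp, -, _, rfl | rfl, rfl⟩ := h
    · exact (apply_iota2 hc.periodic hc.front hp).symm
    · exact (hc.apply_iota3 hf _).symm
  | refl => rfl
  | symm _ _ _ ih => exact ih.symm
  | trans _ _ _ _ _ ih ih' => exact ih.trans ih'

/-- The set of `{2, 3}`-residues of `Γ(f)`. -/
def Residues (f : Tuple) : Type :=
  Quotient ((Relation.EqvGen.setoid (Step f {2, 3})).comap ((↑) : Vtx f → ZMod 3 × ℤ))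

/-- The `{2, 3}`-residue containing a given vertex. -/
def Residues.mk (p : Vtx f) : Residues f := Quotient.mk _ p

theorem Residues.mk_eq_mk {p p' : Vtx f} :
    Residues.mk p = Residues.mk p' ↔ OrbRel f {2, 3} p p' := Quotient.eq

theorem threeOrbits_iff_card_residues : ThreeOrbits f {2, 3} ↔ Nat.card (Residues f) = 3 := by
  have hmk : Function.Surjective (Residues.mk (f := f)) := Quotient.mk_surjective
  rw [← Set.ncard_univ, Set.ncard_eq_three]
  simp only [hmk.exists, Subtype.exists, Set.eq_univ_iff_forall, eq_comm (a := Set.univ),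
    hmk.forall, Subtype.forall, Set.mem_insert_iff, Set.mem_singleton_iff, Residues.mk_eq_mk, ne_eq]
  have hsymm : ∀ v w, OrbRel f {2, 3} v w ↔ OrbRel f {2, 3} w v := fun v w =>
    ⟨.symm v w, .symm w v⟩
  constructor
  · rintro ⟨a, b, c, ha, hb, hc, hab, hac, hbc, h⟩
    exact ⟨a, ha, b, hb, c, hc, hab, hac, hbc, fun v hv => by
      simpa only [hsymm v] using h v hv⟩
  · rintro ⟨a, ha, b, hb, c, hc, hab, hac, hbc, h⟩
    exact ⟨a, b, c, ha, hb, hc, hab, hac, hbc, fun v hv => by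
      simpa only [hsymm v] using h v hv⟩

theorem hasLabelling_residues (hf : CondI f) : HasLabelling (Residues f) f := by
  have hlt : ∀ i, f.h i < f.twol i := fun i => lt_add_of_pos_left _ (hf _)
  have hmod : ∀ i j, 0 ≤ j → j < f.h i → j % f.twol i = j := fun i j h0 h1 =>
    Int.emod_eq_of_lt h0 (h1.trans (hlt i))
  refine ⟨fun i j => .mk ⟨(i, j % f.twol i), emod_mem_vtx hf i j⟩, ⟨fun i j => by simp,
    fun i j h0 h1 => ?_, fun i j h0 h1 => ?_⟩, ?_⟩
  · refine Residues.mk_eq_mk.2 (.rel _ _ ⟨emod_mem_vtx hf _ _, emod_mem_vtx hf _ _, 2, by simp, ?_⟩)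
    simp [iota, iota2, hmod i j h0 h1, h1]
  · refine Residues.mk_eq_mk.2 (.rel _ _ ⟨emod_mem_vtx hf _ _, emod_mem_vtx hf _ _, 3, by simp, ?_⟩)
    simp [iota, iota3, rho, rhoInv, iota2, hmod i j h0 h1, h1]
  · rintro ⟨⟨⟨i, j⟩, hj⟩⟩
    exact ⟨i, j, congrArg Residues.mk (Subtype.ext (by simp [Int.emod_eq_of_lt hj.1 hj.2]))⟩

theorem HasLabelling.exists_surjective (h : HasLabelling X f) (hf : CondI f) :
    ∃ s : Residues f → X, Function.Surjective s := by
  obtain ⟨c, hc, hsurj⟩ := h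
  refine ⟨Quotient.lift (fun p => c p.1.1 p.1.2) fun _ _ h => hc.eq_of_orbRel hf h, fun x => ?_⟩
  obtain ⟨i, j, rfl⟩ := hsurj x
  exact ⟨.mk ⟨_, emod_mem_vtx hf i j⟩, periodic_emod (hc.periodic i) j⟩

theorem Admissible.of_hasLabelling_iff (hf : Admissible f) (hg : CondsI_V g)
    (hfg : ∀ X : Type, HasLabelling X f ↔ HasLabelling X g) : Admissible g := by
  obtain ⟨hf, hf'⟩ := admissible_iff.1 hf
  obtain ⟨s, hs⟩ := ((hfg _).2 (hasLabelling_residues hg.condI)).exists_surjective hf.condI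
  obtain ⟨t, ht⟩ := ((hfg _).1 (hasLabelling_residues hf.condI)).exists_surjective hg.condI
  obtain ⟨e⟩ := Function.Embedding.antisymm (Function.Embedding.ofSurjective s hs)
    (Function.Embedding.ofSurjective t ht)
  rw [threeOrbits_iff_card_residues] at hf'
  exact admissible_iff.2 ⟨hg, threeOrbits_iff_card_residues.2 (by rw [Nat.card_congr e, hf'])⟩

/-! ### Transport of labellings along the `ψᵢ` -/

theorem h_psi1 (f : Tuple) (i : ZMod 3) : (psi1 f).h i = f.h (i + 1) := by
  revert i
  exact forall_zmod_three.2 ⟨rfl, rfl, rfl⟩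

theorem q_psi1 (f : Tuple) (i : ZMod 3) : (psi1 f).q i = f.q (i + 1) := by
  revert i
  exact forall_zmod_three.2 ⟨rfl, rfl, rfl⟩

theorem twol_psi1 (f : Tuple) (i : ZMod 3) : (psi1 f).twol i = f.twol (i + 1) := by
  revert i
  exact forall_zmod_three.2 ⟨rfl, rfl, rfl⟩

theorem h_psi2 (f : Tuple) (i : ZMod 3) : (psi2 f).h i = f.h (-i - 1) := by
  revert i
  exact forall_zmod_three.2 ⟨rfl, rfl, rfl⟩

theorem q_psi2 (f : Tuple) (i : ZMod 3) : (psi2 f).q i = f.q (-i) := by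
  revert i
  exact forall_zmod_three.2 ⟨rfl, rfl, rfl⟩

theorem twol_psi2 (f : Tuple) (i : ZMod 3) : (psi2 f).twol i = f.twol (-i) := by
  rw [Tuple.twol, h_psi2, h_psi2, Tuple.twol, add_comm, show -(i - 1) - 1 = -i by ring]

/-- `ψ₃` without the reduction of the `q`-entries. -/
def negTwist (f : Tuple) : Tuple := ⟨f.h0, f.h1, f.h2, -f.q0, -f.q1, -f.q2⟩

theorem q_negTwist (f : Tuple) (i : ZMod 3) : (negTwist f).q i = -f.q i := by
  revert i
  exact forall_zmod_three.2 ⟨rfl, rfl, rfl⟩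

theorem psi3_eq_reduce_negTwist (f : Tuple) : psi3 f = reduce (negTwist f) := rfl

theorem HasLabelling.reduce (hX : HasLabelling X f) : HasLabelling X (reduce f) := by
  obtain ⟨c, hc, hsurj⟩ := hX
  refine ⟨c, ⟨hc.periodic, hc.front, fun i j h0 h1 => ?_⟩, hsurj⟩
  simpa only [q_reduce, periodic_add_emod (hc.periodic _)] using hc.back i j h0 h1

theorem HasLabelling.psi1 (hX : HasLabelling X f) : HasLabelling X (psi1 f) := by
  obtain ⟨c, hc, hsurj⟩ := hX
  refine ⟨fun i => c (i + 1), ⟨fun i => ?_, fun i j h0 h1 => ?_, fun i j h0 h1 => ?_⟩, fun x => ?_⟩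
  · rw [twol_psi1]
    exact hc.periodic _
  · rw [h_psi1] at h1
    exact hc.front _ j h0 h1
  · rw [h_psi1] at h1
    rw [q_psi1, q_psi1]
    exact hc.back _ j h0 h1
  · obtain ⟨i, j, h⟩ := hsurj x
    exact ⟨i - 1, j, by simpa using h⟩

theorem HasLabelling.psi2 (hX : HasLabelling X f) : HasLabelling X (psi2 f) := by
  obtain ⟨c, hc, hsurj⟩ := hX
  have hsucc : ∀ i : ZMod 3, -i - 1 + 1 = -i ∧ -(i + 1) = -i - 1 := fun i => by constructor <;> ring
  refine ⟨fun i j => c (-i) (f.q (-i) - 1 - j), ⟨fun i j => ?_, fun i j h0 h1 => ?_,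
    fun i j h0 h1 => ?_⟩, fun x => ?_⟩
  · exact periodic_eq (hc.periodic _) ⟨-1, by rw [twol_psi2]; ring⟩
  · rw [h_psi2] at h1
    have := hc.back (-i - 1) j h0 h1
    rw [(hsucc i).1] at this
    rw [(hsucc i).2]
    convert this.symm using 2 <;> ring
  · rw [h_psi2] at h1
    have := hc.front (-i - 1) j h0 h1
    rw [(hsucc i).1] at this
    simp only [q_psi2, (hsucc i).2]
    convert this.symm using 2 <;> ring
  · obtain ⟨i, j, h⟩ := hsurj x
    exact ⟨-i, f.q i - 1 - j, by simpa using h⟩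

theorem HasLabelling.negTwist (hX : HasLabelling X f) : HasLabelling X (negTwist f) := by
  obtain ⟨c, hc, hsurj⟩ := hX
  refine ⟨fun i j => c i (j + f.q i), ⟨fun i j => ?_, hc.back, fun i j h0 h1 => ?_⟩, fun x => ?_⟩
  · exact periodic_eq (hc.periodic i) ⟨1, by simp only [Tuple.twol, Tuple.h, GMN.negTwist]; ring⟩
  · simpa only [q_negTwist, neg_add_cancel_right] using hc.front i j h0 h1
  · obtain ⟨i, j, h⟩ := hsurj x
    exact ⟨i, j - f.q i, by simpa using h⟩

theorem HasLabelling.psi3 (hX : HasLabelling X f) : HasLabelling X (psi3 f) :=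
  HasLabelling.reduce hX.negTwist

end Labelling

/-! ### Elimination of circle `0` -/

section Arcs

variable {X : Type*} {f g : Tuple} {m n : ℤ} {a b d : ℤ → X} {c : ZMod 3 → ℤ → X}

/-- `d` is the function of period `n + m` on a circle glued, with reversed orientation, from an
arc `[0, m)` along which it agrees with `a` and an arc `[-n, 0)` along which it agrees with
`b`. -/
structure IsGluing (m n : ℤ) (a b d : ℤ → X) : Prop where
  periodic : Function.Periodic d (n + m)
  eq_fst : ∀ j, 0 ≤ j → j < m → d j = a (-j - 1)
  snd_eq : ∀ j, 0 ≤ j → j < n → b j = d (-j - 1)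

theorem exists_isGluing (hm : 0 ≤ m) (hn : 0 ≤ n) (a b : ℤ → X) : ∃ d, IsGluing m n a b d := by
  let r (j : ℤ) : ℤ := (j + n) % (n + m) - n
  have hr : ∀ j, -n ≤ j → j < m → r j = j := fun j _ _ => by
    simp only [r]
    rw [Int.emod_eq_of_lt (by omega) (by omega), add_sub_cancel_right]
  refine ⟨fun j => if r j < 0 then b (-r j - 1) else a (-r j - 1), fun j => ?_,
    fun j _ _ => ?_, fun j _ _ => ?_⟩
  · simp only [r, add_right_comm j (n + m) n, Int.add_emod_right]
  · rw [hr j (by omega) (by omega), if_neg (by omega)]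
  · rw [hr (-j - 1) (by omega) (by omega), if_pos (by omega)]
    ring_nf

theorem IsGluing.eq_snd (hd : IsGluing m n a b d) {j : ℤ} (hj : -n ≤ j) (hj' : j < 0) :
    d j = b (-j - 1) := by
  rw [hd.snd_eq _ (by omega) (by omega)]
  ring_nf

theorem IsGluing.eq_snd_of_ge (hd : IsGluing m n a b d) {j : ℤ} (hj : m ≤ j) (hj' : j < n + m) :
    d j = b (-j - 1 + (n + m)) := by
  rw [← hd.periodic.sub_eq, hd.eq_snd (by omega) (by omega)]
  ring_nf

theorem IsGluing.eq_fst_of_ge (hd : IsGluing m n a b d) {j : ℤ} (hj : n + m ≤ j)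
    (hj' : j < n + m + m) : d j = a (-j - 1 + (n + m)) := by
  rw [← hd.periodic.sub_eq, hd.eq_fst _ (by omega) (by omega)]
  ring_nf

theorem isLabelling_iff_isGluing : IsLabelling f c ↔
    (Function.Periodic (c 1) (f.h0 + f.h1) ∧ Function.Periodic (c 2) (f.h1 + f.h2)) ∧
    (∀ j, 0 ≤ j → j < f.h1 → c 1 j = c 2 (-j - 1)) ∧
    (∀ j, 0 ≤ j → j < f.h1 → c 1 (j + f.q1) = c 2 (-j - 1 + f.q2)) ∧
    IsGluing f.h0 f.h2 (c 1) (c 2) (c 0) ∧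
    IsGluing f.h0 f.h2 (fun j => c 1 (j + f.q1)) (fun j => c 2 (j + f.q2))
      (fun j => c 0 (j + f.q0)) := by
  constructor
  · rintro ⟨hper, hfront, hback⟩
    exact ⟨⟨hper 1, hper 2⟩, hfront 1, hback 1, ⟨hper 0, hfront 0, hfront 2⟩,
      ⟨Function.Periodic.add_const (hper 0) f.q0, hback 0, hback 2⟩⟩
  · rintro ⟨⟨p1, p2⟩, f1, b1, ⟨p0, f0, f2⟩, ⟨-, b0, b2⟩⟩
    exact ⟨forall_zmod_three.2 ⟨p0, p1, p2⟩, forall_zmod_three.2 ⟨f0, f1, f2⟩,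
      forall_zmod_three.2 ⟨b0, b1, b2⟩⟩

/-- The conditions that a labelling imposes on its restrictions `a` and `b` to the circles `1`
and `2`. The last six eliminate circle `0`: they are indexed by the pairs of arcs of circles `1`
and `2` that `ι₂` and `ι₃` glue to a common arc of circle `0`, with `j` the coordinate on circle
`0` after rotation by `q₀`; primes mark the arcs lying beyond one period of circle `0`. -/
structure IsArcLabelling (f : Tuple) (a b : ℤ → X) : Prop where
  periodic_fst : Function.Periodic a (f.h0 + f.h1)
  periodic_snd : Function.Periodic b (f.h1 + f.h2)
  front : ∀ j, 0 ≤ j → j < f.h1 → a j = b (-j - 1)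
  back : ∀ j, 0 ≤ j → j < f.h1 → a (j + f.q1) = b (-j - 1 + f.q2)
  aa : ∀ j, 0 ≤ j → j + f.q0 < f.h0 → a (-j - 1 - f.q0) = a (-j - 1 + f.q1)
  ab : ∀ j, -f.h2 ≤ j → j < 0 → 0 ≤ j + f.q0 → j + f.q0 < f.h0 →
    a (-j - 1 - f.q0) = b (-j - 1 + f.q2)
  bb : ∀ j, -f.h2 ≤ j → j + f.q0 < 0 → b (-j - 1 - f.q0) = b (-j - 1 + f.q2)
  ba : ∀ j, 0 ≤ j → j < f.h0 → f.h0 ≤ j + f.q0 → j + f.q0 < f.h2 + f.h0 →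
    b (-j - 1 - f.q0 + (f.h2 + f.h0)) = a (-j - 1 + f.q1)
  bb' : ∀ j, j < 0 → f.h0 ≤ j + f.q0 →
    b (-j - 1 - f.q0 + (f.h2 + f.h0)) = b (-j - 1 + f.q2)
  aa' : ∀ j, j < f.h0 → f.h2 + f.h0 ≤ j + f.q0 →
    a (-j - 1 - f.q0 + (f.h2 + f.h0)) = a (-j - 1 + f.q1)

theorem IsLabelling.isArcLabelling (hc : IsLabelling f c) (hq : 0 ≤ f.q0)
    (hq' : f.q0 < f.h2 + f.h0) : IsArcLabelling f (c 1) (c 2) := by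
  obtain ⟨⟨p1, p2⟩, f1, b1, hf, hb⟩ := isLabelling_iff_isGluing.1 hc
  have hj : ∀ j, -j - 1 - f.q0 = -(j + f.q0) - 1 := fun j => by ring
  refine ⟨p1, p2, f1, b1, ?_, ?_, ?_, ?_, ?_, ?_⟩ <;> intro j <;> intros <;> rw [hj]
  · exact (hf.eq_fst _ (by omega) (by omega)).symm.trans (hb.eq_fst _ (by omega) (by omega))
  · exact (hf.eq_fst _ (by omega) (by omega)).symm.trans (hb.eq_snd (by omega) (by omega))
  · exact (hf.eq_snd (by omega) (by omega)).symm.trans (hb.eq_snd (by omega) (by omega))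
  · exact (hf.eq_snd_of_ge (by omega) (by omega)).symm.trans (hb.eq_fst _ (by omega) (by omega))
  · exact (hf.eq_snd_of_ge (by omega) (by omega)).symm.trans (hb.eq_snd (by omega) (by omega))
  · exact (hf.eq_fst_of_ge (by omega) (by omega)).symm.trans (hb.eq_fst _ (by omega) (by omega))

theorem IsArcLabelling.exists_isLabelling (hab : IsArcLabelling f a b) (hf : CondI f)
    (hq : 0 ≤ f.q0) (hq' : f.q0 < f.h2 + f.h0) :
    ∃ c : ZMod 3 → ℤ → X, IsLabelling f c ∧ c 1 = a ∧ c 2 = b := by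
  obtain ⟨h0, -, h2⟩ : 0 < f.h0 ∧ 0 < f.h1 ∧ 0 < f.h2 := forall_zmod_three.1 hf
  obtain ⟨d, hd⟩ := exists_isGluing h0.le h2.le a b
  have hj : ∀ j, -j - 1 - f.q0 = -(j + f.q0) - 1 := fun j => by ring
  have hshift : IsGluing f.h0 f.h2 (fun j => a (j + f.q1)) (fun j => b (j + f.q2))
      (fun j => d (j + f.q0)) := by
    refine ⟨hd.periodic.add_const f.q0, fun j l l' => ?_, fun j l l' => ?_⟩
    · rcases lt_or_ge (j + f.q0) f.h0 with h | h
      · rw [hd.eq_fst _ (by omega) h, ← hj, hab.aa j l h]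
      rcases lt_or_ge (j + f.q0) (f.h2 + f.h0) with h' | h'
      · rw [hd.eq_snd_of_ge h h', ← hj, hab.ba j l l' h h']
      · rw [hd.eq_fst_of_ge h' (by omega), ← hj, hab.aa' j l' h']
    · obtain ⟨i, rfl⟩ : ∃ i, j = -i - 1 := ⟨-j - 1, by ring⟩
      rw [show -(-i - 1) - 1 = i by ring]
      rcases lt_or_ge (i + f.q0) 0 with h | h
      · rw [hd.eq_snd (by omega) h, ← hj, hab.bb i (by omega) h]
      rcases lt_or_ge (i + f.q0) f.h0 with h' | h'
      · rw [hd.eq_fst _ h h', ← hj, hab.ab i (by omega) (by omega) h h']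
      · rw [hd.eq_snd_of_ge h' (by omega), ← hj, hab.bb' i (by omega) h']
  exact ⟨fun i => if i = 0 then d else if i = 1 then a else b, isLabelling_iff_isGluing.2
    ⟨⟨hab.periodic_fst, hab.periodic_snd⟩, hab.front, hab.back, hd, hshift⟩, rfl, rfl⟩

theorem IsLabelling.exists_apply_one_or_two (hc : IsLabelling f c) (hf : CondI f) (i : ZMod 3)
    (j : ℤ) : ∃ x, c 1 x = c i j ∨ c 2 x = c i j := by
  revert i
  refine forall_zmod_three.2 ⟨?_, ⟨j, .inl rfl⟩, ⟨j, .inr rfl⟩⟩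
  have hglue := (isLabelling_iff_isGluing.1 hc).2.2.2.1
  rw [← periodic_emod hglue.periodic j]
  have hr := Int.emod_nonneg j (twol_pos hf 0).ne'
  have hr' := Int.emod_lt_of_pos j (twol_pos hf 0)
  rw [Tuple.twol_zero] at hr hr'
  rcases lt_or_ge (j % (f.h2 + f.h0)) f.h0 with h | h
  · exact ⟨_, .inl (hglue.eq_fst _ hr h).symm⟩
  · exact ⟨_, .inr (hglue.eq_snd_of_ge h hr').symm⟩

theorem HasLabelling.of_isArcLabelling (hX : HasLabelling X f) (hf : CondI f) (hfq : 0 ≤ f.q0)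
    (hfq' : f.q0 < f.h2 + f.h0) (hg : CondI g) (hgq : 0 ≤ g.q0) (hgq' : g.q0 < g.h2 + g.h0)
    (s t : ℤ) (hfg : ∀ a b : ℤ → X, IsArcLabelling f a b →
      IsArcLabelling g (fun j => a (j + s)) (fun j => b (t - j))) : HasLabelling X g := by
  obtain ⟨c, hc, hsurj⟩ := hX
  obtain ⟨d, hd, h1, h2⟩ := (hfg _ _ (hc.isArcLabelling hfq hfq')).exists_isLabelling hg hgq hgq'
  refine ⟨d, hd, fun x => ?_⟩
  obtain ⟨i, j, rfl⟩ := hsurj x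
  obtain ⟨y, hy | hy⟩ := hc.exists_apply_one_or_two hf i j
  · exact ⟨1, y - s, by simpa [h1] using hy⟩
  · exact ⟨2, t - y, by simpa [h2] using hy⟩

/-! ### Transport of labellings along `σ` -/

/-- The first branch of `σ` without the reduction of the `q`-entries. -/
def sigmaShort (f : Tuple) : Tuple :=
  ⟨f.h0 + f.h1 - f.q0, f.q0, f.h2 + f.h1 - f.q0,
    f.h0 + f.h1 + f.h2 - 2 * f.q0, f.q0 + f.q1 + f.h1, f.q0 + f.q2 + f.h1⟩

/-- The second branch of `σ` without the reduction of the `q`-entries. -/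
def sigmaLong (f : Tuple) : Tuple :=
  ⟨f.q0 + f.h1 - f.h2, f.h0 + f.h2 - f.q0, f.q0 + f.h1 - f.h0,
    f.h1, f.q0 + f.q1 - f.h2, f.q0 + f.q2 - f.h0⟩

/-- The third branch of `σ` without the reduction of the `q`-entries. -/
def sigmaMiddle (f : Tuple) : Tuple :=
  ⟨f.h1, f.h0, f.h1 + f.h2 - f.h0, f.h1 + f.h2 - f.q0, f.q1, 2 * f.q0 + f.q2 + f.h1 - f.h0⟩

/-- The domain of the first branch of `σ`. -/
structure IsShort (f : Tuple) : Prop where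
  pos : 0 < f.q0
  lt_h0 : f.q0 < f.h0
  lt_h2 : f.q0 < f.h2

/-- The domain of the second branch of `σ`. -/
structure IsLong (f : Tuple) : Prop where
  pos : 0 < f.q0
  h0_lt : f.h0 < f.q0
  h2_lt : f.h2 < f.q0

/-- The domain of the third branch of `σ`. -/
structure IsMiddle (f : Tuple) : Prop where
  pos : 0 < f.q0
  h0_lt : f.h0 < f.q0
  lt_h2 : f.q0 < f.h2

theorem IsArcLabelling.sigmaShort (hab : IsArcLabelling f a b) (hf : IsShort f) :
    IsArcLabelling (sigmaShort f) (fun j => a (j + -f.q0)) (fun j => b (f.q2 - 1 - j)) := by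
  obtain ⟨pa, pb, front, back, haa, hab, hbb, hba, -, -⟩ := hab
  obtain ⟨-, h0, h2⟩ := hf
  constructor <;> intro j <;> simp only [GMN.sigmaShort] <;> intros
  · exact periodic_eq pa ⟨1, by ring⟩
  · exact periodic_eq pb ⟨-1, by ring⟩
  · convert hab (-1 - j) (by omega) (by omega) (by omega) (by omega) using 2 <;> ring
  · exact (periodic_eq pa ⟨1, by ring⟩).trans
      ((hba (f.h0 - 1 - j) (by omega) (by omega) (by omega) (by omega)).symm.trans
        (periodic_eq pb ⟨1, by ring⟩))
  · omega
  · exact (periodic_eq pa ⟨-1, by ring⟩).trans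
      ((front (f.q0 - f.h2 - 1 - j) (by omega) (by omega)).trans
        (periodic_eq pb ⟨1, by ring⟩))
  · omega
  · convert (back (f.h1 - 1 - j) (by omega) (by omega)).symm using 2 <;> ring
  · exact (periodic_eq pb ⟨-1, by ring⟩).trans
      ((hbb (-f.h2 - 1 - j) (by omega) (by omega)).symm.trans (periodic_eq pb ⟨1, by ring⟩))
  · exact (periodic_eq pa ⟨0, by ring⟩).trans
      ((haa (j - f.h1) (by omega) (by omega)).trans (periodic_eq pa ⟨0, by ring⟩))

theorem IsArcLabelling.sigmaMiddle (hab : IsArcLabelling f a b) (hf : IsMiddle f) :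
    IsArcLabelling (sigmaMiddle f) (fun j => a (j + -f.h0))
      (fun j => b (f.q0 + f.q2 - f.h0 - 1 - j)) := by
  obtain ⟨pa, pb, front, back, -, hab, hbb, hba, hbb', -⟩ := hab
  obtain ⟨-, h0, h2⟩ := hf
  constructor <;> intro j <;> simp only [GMN.sigmaMiddle] <;> intros
  · exact periodic_eq pa ⟨1, by ring⟩
  · exact periodic_eq pb ⟨-1, by ring⟩
  · convert hab (f.h0 - f.q0 - 1 - j) (by omega) (by omega) (by omega) (by omega) using 2 <;> ring
  · exact (periodic_eq pa ⟨0, by ring⟩).trans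
      ((hba (f.h0 - 1 - j) (by omega) (by omega) (by omega) (by omega)).symm.trans
        (periodic_eq pb ⟨1, by ring⟩))
  · omega
  · exact (periodic_eq pa ⟨-1, by ring⟩).trans
      ((front (f.q0 - f.h2 - 1 - j) (by omega) (by omega)).trans
        (periodic_eq pb ⟨1, by ring⟩))
  · exact (periodic_eq pb ⟨0, by ring⟩).trans
      ((hbb' (f.h0 - f.h1 - f.h2 - 1 - j) (by omega) (by omega)).symm.trans
        (periodic_eq pb ⟨2, by ring⟩))
  · exact (periodic_eq pb ⟨0, by ring⟩).trans
      ((back (f.h1 - 1 - j) (by omega) (by omega)).symm.trans (periodic_eq pa ⟨1, by ring⟩))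
  · exact (periodic_eq pb ⟨-1, by ring⟩).trans
      ((hbb (-f.h2 - 1 - j) (by omega) (by omega)).symm.trans (periodic_eq pb ⟨1, by ring⟩))
  · omega

end Arcs

/-! ### Relations between the `ψᵢ` and `σ` -/

section Relations

variable {f : Tuple}

theorem reduce_psi2 (f : Tuple) : reduce (psi2 f) = psi2 (reduce f) := by
  simp only [reduce, psi2, add_comm]

theorem psi3_psi2 (f : Tuple) : psi3 (psi2 f) = psi2 (psi3 f) := reduce_psi2 (negTwist f)

theorem psi3_reduce (f : Tuple) : psi3 (reduce f) = psi3 f := by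
  change reduce (negTwist (reduce f)) = reduce (negTwist f)
  refine reduce_congr rfl rfl rfl ⟨f.q0 / (f.h2 + f.h0), ?_⟩ ⟨f.q1 / (f.h0 + f.h1), ?_⟩
    ⟨f.q2 / (f.h1 + f.h2), ?_⟩
  all_goals
    simp only [negTwist, reduce, Int.emod_def]
    ring

theorem psi3_psi3 (hf : CondIII f) : psi3 (psi3 f) = f := by
  rw [psi3_eq_reduce_negTwist f, psi3_reduce, psi3_eq_reduce_negTwist]
  simpa only [negTwist, neg_neg] using reduce_eq_self hf

/-- `ψ₃` with `q₀` replaced by `2l₀ - q₀`, and without the reduction of `q₁` and `q₂`. -/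
def reflect (f : Tuple) : Tuple := ⟨f.h0, f.h1, f.h2, f.h2 + f.h0 - f.q0, -f.q1, -f.q2⟩

theorem psi3_eq_reduce_reflect (f : Tuple) : psi3 f = reduce (reflect f) := by
  change reduce (negTwist f) = reduce (reflect f)
  refine reduce_congr rfl rfl rfl ⟨-1, ?_⟩ ⟨0, ?_⟩ ⟨0, ?_⟩ <;>
    simp only [negTwist, reflect] <;> ring

theorem q0_psi3 (h : 0 < f.q0) (h' : f.q0 < f.h2 + f.h0) : (psi3 f).q0 = f.h2 + f.h0 - f.q0 := by
  rw [psi3_eq_reduce_reflect]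
  exact Int.emod_eq_of_lt (sub_nonneg.2 h'.le) (sub_lt_self _ h)

theorem CondsI_V.psi1 (hf : CondsI_V f) : CondsI_V (psi1 f) := by
  simp only [CondsI_V, condsI_II_V_iff, condIII_iff, GMN.psi1] at *
  omega

theorem CondsI_V.psi2 (hf : CondsI_V f) : CondsI_V (psi2 f) := by
  simp only [CondsI_V, condsI_II_V_iff, condIII_iff, GMN.psi2] at *
  omega

theorem CondsI_V.psi3 (hf : CondsI_V f) : CondsI_V (psi3 f) := by
  have hf' := hf.1
  refine CondsI_II_V.reduce (f := negTwist f) ?_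
  simp only [condsI_II_V_iff, negTwist] at *
  omega

theorem CondsI_V.sigma_cases (hf : CondsI_V f) :
    f.q0 = 0 ∨ IsShort f ∨ IsLong f ∨ IsMiddle f ∨ IsMiddle (GMN.psi2 f) := by
  have hp := condsI_II_V_iff.1 hf.1
  have hq := (condIII_iff.1 hf.2).1
  rcases hq.1.eq_or_lt with h | h
  · exact .inl h.symm
  rcases lt_or_gt_of_ne (show f.q0 ≠ f.h0 by omega) with h0 | h0 <;>
    rcases lt_or_gt_of_ne (show f.q0 ≠ f.h2 by omega) with h2 | h2
  · exact .inr (.inl ⟨h, h0, h2⟩)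
  · exact .inr (.inr (.inr (.inr ⟨h, h2, h0⟩)))
  · exact .inr (.inr (.inr (.inl ⟨h, h0, h2⟩)))
  · exact .inr (.inr (.inl ⟨h, h0, h2⟩))

theorem sigma_of_q0_eq_zero (hf : f.q0 = 0) : sigma f = f := if_pos hf

theorem IsShort.sigma_eq (hf : IsShort f) : sigma f = reduce (sigmaShort f) := by
  rw [sigma, if_neg hf.pos.ne', if_pos ⟨hf.lt_h0, hf.lt_h2⟩]
  rfl

theorem IsLong.sigma_eq (hf : IsLong f) : sigma f = reduce (sigmaLong f) := by
  rw [sigma, if_neg hf.pos.ne', if_neg fun h => h.1.asymm hf.h0_lt, if_pos ⟨hf.h0_lt, hf.h2_lt⟩]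
  rfl

theorem IsMiddle.sigma_eq (hf : IsMiddle f) : sigma f = reduce (sigmaMiddle f) := by
  rw [sigma, if_neg hf.pos.ne', if_neg fun h => h.1.asymm hf.h0_lt,
    if_neg fun h => h.2.asymm hf.lt_h2, if_pos hf.lt_h2]
  rfl

theorem IsMiddle.sigma_psi2 (hf : IsMiddle f) : sigma (psi2 f) = psi2 (sigma f) := by
  have h : (psi2 f).q0 ≠ 0 := hf.pos.ne'
  have h2 : (psi2 f).q0 < (psi2 f).h0 := hf.lt_h2
  have h0 : (psi2 f).h2 < (psi2 f).q0 := hf.h0_lt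
  rw [hf.sigma_eq, ← reduce_psi2, sigma, if_neg h, if_neg fun h => h.2.asymm h0,
    if_neg fun h => h.1.asymm h2, if_neg h0.not_gt]
  rfl

theorem sigma_psi2 (hf : CondsI_V f) : sigma (psi2 f) = psi2 (sigma f) := by
  rcases hf.sigma_cases with h | h | h | h | h
  · rw [sigma_of_q0_eq_zero h, sigma_of_q0_eq_zero (f := psi2 f) h]
  · rw [h.sigma_eq, IsShort.sigma_eq (f := psi2 f) ⟨h.pos, h.lt_h2, h.lt_h0⟩, ← reduce_psi2]
    simp only [sigmaShort, psi2]
    ring_nf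
  · rw [h.sigma_eq, IsLong.sigma_eq (f := psi2 f) ⟨h.pos, h.h2_lt, h.h0_lt⟩, ← reduce_psi2]
    simp only [sigmaLong, psi2]
    ring_nf
  · exact h.sigma_psi2
  · exact congrArg psi2 h.sigma_psi2.symm

theorem CondsI_V.sigmaShort (hf : CondsI_V f) (h : IsShort f) : CondsI_II_V (sigmaShort f) := by
  have := condsI_II_V_iff.1 hf.1
  obtain ⟨_, _, _⟩ := h
  simp only [condsI_II_V_iff, GMN.sigmaShort]
  omega

theorem CondsI_V.sigmaLong (hf : CondsI_V f) (h : IsLong f) : CondsI_II_V (sigmaLong f) := by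
  have := condsI_II_V_iff.1 hf.1
  have := (condIII_iff.1 hf.2).1
  obtain ⟨_, _, _⟩ := h
  simp only [condsI_II_V_iff, GMN.sigmaLong]
  omega

theorem CondsI_V.sigmaMiddle (hf : CondsI_V f) (h : IsMiddle f) :
    CondsI_II_V (sigmaMiddle f) := by
  have := condsI_II_V_iff.1 hf.1
  obtain ⟨_, _, _⟩ := h
  simp only [condsI_II_V_iff, GMN.sigmaMiddle]
  omega

theorem CondsI_V.sigma (hf : CondsI_V f) : CondsI_V (sigma f) := by
  rcases hf.sigma_cases with h | h | h | h | h
  · rwa [sigma_of_q0_eq_zero h]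
  · exact h.sigma_eq ▸ (hf.sigmaShort h).reduce
  · exact h.sigma_eq ▸ (hf.sigmaLong h).reduce
  · exact h.sigma_eq ▸ (hf.sigmaMiddle h).reduce
  · rw [show GMN.sigma f = GMN.psi2 (GMN.sigma (GMN.psi2 f)) from h.sigma_psi2, h.sigma_eq]
    exact (hf.psi2.sigmaMiddle h).reduce.psi2

/-- Up to the symmetries `ψ₂` and `ψ₃`, which commute with `σ`, only the trivial, the first and
the third branches of `σ` occur. -/
theorem CondsI_V.sigma_induction {P : Tuple → Prop} (hf : CondsI_V f)
    (psi2 : ∀ f, CondsI_V f → P (GMN.psi2 f) → P f)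
    (psi3 : ∀ f, CondsI_V f → P (GMN.psi3 f) → P f)
    (zero : ∀ f, CondsI_V f → f.q0 = 0 → P f) (short : ∀ f, CondsI_V f → IsShort f → P f)
    (middle : ∀ f, CondsI_V f → IsMiddle f → P f) : P f := by
  rcases hf.sigma_cases with h | h | h | h | h
  · exact zero f hf h
  · exact short f hf h
  · have hq := (condIII_iff.1 hf.2).1.2
    have hq' := q0_psi3 h.pos hq
    have := h.h0_lt
    have := h.h2_lt
    exact psi3 f hf (short _ hf.psi3 ⟨by omega, hq' ▸ by simp only [GMN.psi3]; omega,
      hq' ▸ by simp only [GMN.psi3]; omega⟩)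
  · exact middle f hf h
  · exact psi2 f hf (middle _ hf.psi2 h)

theorem sigma_reduce (h : 0 < f.q0) (h' : f.q0 < f.h2 + f.h0) : sigma (reduce f) = sigma f := by
  obtain ⟨h0, h1, h2, q0, q1, q2⟩ := f
  have hq1 : q1 % (h0 + h1) - q1 = (h0 + h1) * -(q1 / (h0 + h1)) := by rw [Int.emod_def]; ring
  have hq2 : q2 % (h1 + h2) - q2 = (h1 + h2) * -(q2 / (h1 + h2)) := by rw [Int.emod_def]; ring
  simp only [reduce, sigma, Int.emod_eq_of_lt h.le h', h.ne', if_false]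
  split_ifs <;> refine reduce_congr (f := ⟨_, _, _, _, _, _⟩) (g := ⟨_, _, _, _, _, _⟩) rfl rfl rfl
    ⟨0, by ring⟩ ⟨-(q1 / (h0 + h1)), ?_⟩ ⟨-(q2 / (h1 + h2)), ?_⟩
  all_goals first | linear_combination hq1 | linear_combination hq2

theorem sigma_psi3 (hf : CondsI_V f) : sigma (psi3 f) = psi3 (sigma f) := by
  refine hf.sigma_induction (P := fun f => sigma (psi3 f) = psi3 (sigma f)) ?_ ?_ ?_ ?_ ?_ <;>
    intro f hf h
  · rw [psi3_psi2, sigma_psi2 hf.psi3, sigma_psi2 hf, psi3_psi2] at h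
    exact congrArg psi2 h
  · rw [psi3_psi3 hf.2] at h
    rw [h, psi3_psi3 hf.psi3.sigma.2]
  · rw [sigma_of_q0_eq_zero h, sigma_of_q0_eq_zero (by simp [psi3, h])]
  · obtain ⟨hpos, h0, h2⟩ := h
    have hlong : IsLong (reflect f) := by constructor <;> simp only [reflect] <;> omega
    rw [IsShort.sigma_eq ⟨hpos, h0, h2⟩, psi3_reduce, psi3_eq_reduce_reflect f,
      sigma_reduce hlong.pos (sub_lt_self _ hpos), hlong.sigma_eq]
    change _ = reduce (negTwist (sigmaShort f))
    refine reduce_congr ?_ ?_ ?_ ⟨1, ?_⟩ ⟨1, ?_⟩ ⟨1, ?_⟩ <;>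
      simp only [sigmaLong, sigmaShort, reflect, negTwist] <;> ring
  · obtain ⟨hpos, h0, h2⟩ := h
    have hmiddle : IsMiddle (reflect f) := by
      have := hf.condI 0
      constructor <;> simp only [reflect, Tuple.h_zero] at * <;> omega
    rw [IsMiddle.sigma_eq ⟨hpos, h0, h2⟩, psi3_reduce, psi3_eq_reduce_reflect f,
      sigma_reduce hmiddle.pos (sub_lt_self _ hpos), hmiddle.sigma_eq]
    change _ = reduce (negTwist (sigmaMiddle f))
    refine reduce_congr ?_ ?_ ?_ ⟨1, ?_⟩ ⟨0, ?_⟩ ⟨2, ?_⟩ <;>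
      simp only [sigmaMiddle, reflect, negTwist] <;> ring

theorem sigma_sigma (hf : CondsI_V f) : sigma (sigma f) = f := by
  refine hf.sigma_induction (P := fun f => sigma (sigma f) = f) ?_ ?_ ?_ ?_ ?_ <;> intro f hf h
  · rw [sigma_psi2 hf, sigma_psi2 hf.sigma] at h
    exact congrArg psi2 h
  · rw [sigma_psi3 hf, sigma_psi3 hf.sigma] at h
    rw [← psi3_psi3 hf.sigma.sigma.2, h, psi3_psi3 hf.2]
  · rw [sigma_of_q0_eq_zero h, sigma_of_q0_eq_zero h]
  · have := hf.condI 1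
    obtain ⟨hpos, h0, h2⟩ := h
    have hlong : IsLong (sigmaShort f) := by
      constructor <;> simp only [sigmaShort, Tuple.h_one] at * <;> omega
    rw [IsShort.sigma_eq ⟨hpos, h0, h2⟩,
      sigma_reduce hlong.pos (by simp only [sigmaShort, Tuple.h_one] at *; omega), hlong.sigma_eq]
    refine Eq.trans (reduce_congr ?_ ?_ ?_ ⟨0, ?_⟩ ⟨1, ?_⟩ ⟨1, ?_⟩) (reduce_eq_self hf.2) <;>
      simp only [sigmaLong, sigmaShort] <;> ring
  · have := hf.condI 1
    obtain ⟨hpos, h0, h2⟩ := h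
    have hmiddle : IsMiddle (sigmaMiddle f) := by
      constructor <;> simp only [sigmaMiddle, Tuple.h_one] at * <;> omega
    rw [IsMiddle.sigma_eq ⟨hpos, h0, h2⟩,
      sigma_reduce hmiddle.pos (by simp only [sigmaMiddle, Tuple.h_one] at *; omega),
      hmiddle.sigma_eq]
    refine Eq.trans (reduce_congr ?_ ?_ ?_ ⟨0, ?_⟩ ⟨0, ?_⟩ ⟨2, ?_⟩) (reduce_eq_self hf.2) <;>
      simp only [sigmaMiddle] <;> ring

end Relations

/-! ### Closure of the set of admissible tuples -/

section Closure

variable {X : Type*} {f : Tuple}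

theorem HasLabelling.sigmaShort (hX : HasLabelling X f) (hf : CondsI_V f) (h : IsShort f) :
    HasLabelling X (sigmaShort f) := by
  obtain ⟨hq, hq'⟩ := (condIII_iff.1 hf.2).1
  have := hf.condI 1
  refine hX.of_isArcLabelling hf.condI hq hq' (hf.sigmaShort h).1 ?_ ?_ _ _
    fun a b hab => hab.sigmaShort h
  all_goals
    obtain ⟨_, _, _⟩ := h
    simp only [GMN.sigmaShort, Tuple.h_one] at *
    omega

theorem HasLabelling.sigmaMiddle (hX : HasLabelling X f) (hf : CondsI_V f) (h : IsMiddle f) :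
    HasLabelling X (sigmaMiddle f) := by
  obtain ⟨hq, hq'⟩ := (condIII_iff.1 hf.2).1
  have := hf.condI 1
  refine hX.of_isArcLabelling hf.condI hq hq' (hf.sigmaMiddle h).1 ?_ ?_ _ _
    fun a b hab => hab.sigmaMiddle h
  all_goals
    obtain ⟨_, _, _⟩ := h
    simp only [GMN.sigmaMiddle, Tuple.h_one] at *
    omega

theorem HasLabelling.sigma (hX : HasLabelling X f) (hf : CondsI_V f) :
    HasLabelling X (sigma f) := by
  refine hf.sigma_induction (P := fun f => HasLabelling X f → HasLabelling X (GMN.sigma f))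
    ?_ ?_ ?_ ?_ ?_ hX <;> intro f hf h hX
  · have := (h hX.psi2).psi2
    rwa [sigma_psi2 hf] at this
  · have := (h hX.psi3).psi3
    rwa [sigma_psi3 hf, psi3_psi3 hf.sigma.2] at this
  · rwa [sigma_of_q0_eq_zero h]
  · exact h.sigma_eq ▸ (hX.sigmaShort hf h).reduce
  · exact h.sigma_eq ▸ (hX.sigmaMiddle hf h).reduce

theorem Admissible.condsI_V (hf : Admissible f) : CondsI_V f := (admissible_iff.1 hf).1

theorem Admissible.psi1 (hf : Admissible f) : Admissible (psi1 f) :=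
  hf.of_hasLabelling_iff hf.condsI_V.psi1 fun _ => ⟨.psi1, fun h => h.psi1.psi1⟩

theorem Admissible.psi2 (hf : Admissible f) : Admissible (psi2 f) :=
  hf.of_hasLabelling_iff hf.condsI_V.psi2 fun _ => ⟨.psi2, .psi2⟩

theorem Admissible.psi3 (hf : Admissible f) : Admissible (psi3 f) :=
  hf.of_hasLabelling_iff hf.condsI_V.psi3 fun _ =>
    ⟨.psi3, fun h => psi3_psi3 hf.condsI_V.2 ▸ h.psi3⟩

theorem Admissible.sigma (hf : Admissible f) : Admissible (sigma f) :=
  hf.of_hasLabelling_iff hf.condsI_V.sigma fun _ =>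
    ⟨fun h => h.sigma hf.condsI_V, fun h => sigma_sigma hf.condsI_V ▸ h.sigma hf.condsI_V.sigma⟩

end Closure

/-! ### The change of complexity -/

section Complexity

variable {f : Tuple}

theorem nu_psi1 (f : Tuple) : nu (psi1 f) = nu f := by
  simp only [nu, psi1]
  ring

theorem nu_psi2 (f : Tuple) : nu (psi2 f) = nu f := by
  simp only [nu, psi2]
  ring

theorem nu_psi3 (f : Tuple) : nu (psi3 f) = nu f := rfl

theorem delta_psi2 (hf : CondsI_V f) : delta (psi2 f) = delta f := by
  rw [delta, sigma_psi2 hf, nu_psi2, nu_psi2, delta]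

theorem delta_psi3 (hf : CondsI_V f) : delta (psi3 f) = delta f := by
  rw [delta, sigma_psi3 hf, nu_psi3, nu_psi3, delta]

theorem delta_of_q0_eq_zero (h : f.q0 = 0) : delta f = 0 := by
  rw [delta, sigma_of_q0_eq_zero h, sub_self]

theorem delta_eq (hf : CondsI_V f) (hq : f.q0 ≠ 0) :
    delta f = f.h1 - min (min f.q0 (f.h2 + f.h0 - f.q0)) (min f.h0 f.h2) := by
  refine hf.sigma_induction (P := fun f => f.q0 ≠ 0 →
    delta f = f.h1 - min (min f.q0 (f.h2 + f.h0 - f.q0)) (min f.h0 f.h2)) ?_ ?_ ?_ ?_ ?_ hq <;>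
    intro f hf h hq
  · rw [← delta_psi2 hf, h hq]
    simp only [psi2, min_comm, add_comm]
  · have hq' := (condIII_iff.1 hf.2).1
    have hq'' := q0_psi3 (lt_of_le_of_ne hq'.1 hq.symm) hq'.2
    have := h (by omega)
    rw [delta_psi3 hf, hq''] at this
    simp only [psi3] at this
    omega
  · exact absurd h hq
  · rw [delta, h.sigma_eq]
    obtain ⟨_, _, _⟩ := h
    simp only [nu, reduce, sigmaShort]
    omega
  · rw [delta, h.sigma_eq]
    obtain ⟨_, _, _⟩ := h
    simp only [nu, reduce, sigmaMiddle]
    omega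

theorem lt_of_delta_neg (hf : CondsI_V f) (h : delta f < 0) : f.h1 < f.h0 ∧ f.h1 < f.h2 := by
  have hq : f.q0 ≠ 0 := fun hq => h.ne (delta_of_q0_eq_zero hq)
  rw [delta_eq hf hq] at h
  omega

theorem delta_pos (hf : CondsI_V f) (hq : f.q0 ≠ 0) (h : f.h0 < f.h1 ∨ f.h2 < f.h1) :
    0 < delta f := by
  rw [delta_eq hf hq]
  omega

end Complexity

/-! ### The graph of `H`-classes -/

/-- The `H`-equivalence classes of 6-tuples; the class of a tuple which is not admissible is a
singleton. -/
def HClass : Type := Quotient (Relation.EqvGen.setoid HStep)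

namespace HClass

variable {f g : Tuple} {x y : HClass}

/-- The `H`-equivalence class of a 6-tuple. -/
def mk (f : Tuple) : HClass := Quotient.mk _ f

theorem mk_eq_mk : mk f = mk g ↔ HEquiv f g := Quotient.eq

theorem mk_psi1 (hf : Admissible f) : mk (psi1 f) = mk f :=
  (mk_eq_mk.2 (.rel _ _ ⟨hf, hf.psi1, .inl rfl⟩)).symm

theorem mk_psi2 (hf : Admissible f) : mk (psi2 f) = mk f :=
  (mk_eq_mk.2 (.rel _ _ ⟨hf, hf.psi2, .inr (.inl rfl)⟩)).symm

theorem mk_psi3 (hf : Admissible f) : mk (psi3 f) = mk f :=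
  (mk_eq_mk.2 (.rel _ _ ⟨hf, hf.psi3, .inr (.inr rfl)⟩)).symm

/-- The complexity of an `H`-class. -/
def nu : HClass → ℤ :=
  Quotient.lift GMN.nu fun _ _ h => by
    induction h with
    | rel _ _ h =>
      obtain ⟨-, -, rfl | rfl | rfl⟩ := h
      exacts [(nu_psi1 _).symm, (nu_psi2 _).symm, (nu_psi3 _).symm]
    | refl => rfl
    | symm _ _ _ ih => exact ih.symm
    | trans _ _ _ _ _ ih ih' => exact ih.trans ih'

/-- The classes `[σ(ψ₁ⁱ(f))]` for `i = 0, 1, 2`; they depend only on the class of `f`. -/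
def sigmaNeighbors (f : Tuple) : Set HClass :=
  {mk (sigma f), mk (sigma (psi1 f)), mk (sigma (psi1 (psi1 f)))}

theorem mem_sigmaNeighbors :
    y ∈ sigmaNeighbors f ↔ ∃ i : Fin 3, y = mk (sigma (psi1^[i.val] f)) := by
  simp [sigmaNeighbors, Fin.exists_fin_succ]

theorem mk_sigma_psi2 (hf : Admissible f) : mk (sigma (psi2 f)) = mk (sigma f) := by
  rw [sigma_psi2 hf.condsI_V, mk_psi2 hf.sigma]

theorem mk_sigma_psi3 (hf : Admissible f) : mk (sigma (psi3 f)) = mk (sigma f) := by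
  rw [sigma_psi3 hf.condsI_V, mk_psi3 hf.sigma]

theorem sigmaNeighbors_congr (h : HEquiv f g) : sigmaNeighbors f = sigmaNeighbors g := by
  induction h with
  | rel f _ h =>
    obtain ⟨hf, -, rfl | rfl | rfl⟩ := h
    · exact (Set.insert_comm _ _ _).trans (congrArg (insert _) (Set.pair_comm _ _))
    · change _ = {mk (sigma (psi2 f)), mk (sigma (psi2 (psi1 (psi1 f)))),
        mk (sigma (psi2 (psi1 f)))}
      rw [mk_sigma_psi2 hf, mk_sigma_psi2 hf.psi1, mk_sigma_psi2 hf.psi1.psi1,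
        sigmaNeighbors, Set.pair_comm]
    · change _ = {mk (sigma (psi3 f)), mk (sigma (psi3 (psi1 f))),
        mk (sigma (psi3 (psi1 (psi1 f))))}
      rw [mk_sigma_psi3 hf, mk_sigma_psi3 hf.psi1, mk_sigma_psi3 hf.psi1.psi1, sigmaNeighbors]
  | refl => rfl
  | symm _ _ _ ih => exact ih.symm
  | trans _ _ _ _ _ ih ih' => exact ih.trans ih'

/-- The graph on the `H`-classes whose edges join the class of an admissible `f` to that of
`σ(f)`; its components are the `G`-orbits. -/
def sigmaGraph : SimpleGraph HClass :=
  .fromRel fun x y => ∃ f, Admissible f ∧ x = mk f ∧ y = mk (sigma f)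

theorem sigmaGraph_adj :
    sigmaGraph.Adj x y ↔ x ≠ y ∧ ∃ f, Admissible f ∧ x = mk f ∧ y = mk (sigma f) := by
  refine and_congr_right fun _ => or_iff_left_of_imp ?_
  rintro ⟨f, hf, rfl, rfl⟩
  exact ⟨sigma f, hf.sigma, rfl, by rw [sigma_sigma hf.condsI_V]⟩

theorem sigmaGraph_adj_mk (hf : Admissible f) :
    sigmaGraph.Adj (mk f) y ↔ mk f ≠ y ∧ y ∈ sigmaNeighbors f := by
  rw [sigmaGraph_adj]
  refine and_congr_right fun _ => ⟨?_, ?_⟩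
  · rintro ⟨g, -, hfg, rfl⟩
    exact sigmaNeighbors_congr (mk_eq_mk.1 hfg) ▸ .inl rfl
  · rintro (rfl | rfl | rfl)
    · exact ⟨f, hf, rfl, rfl⟩
    · exact ⟨_, hf.psi1, (mk_psi1 hf).symm, rfl⟩
    · exact ⟨_, hf.psi1.psi1, (mk_psi1 hf.psi1 |>.trans (mk_psi1 hf)).symm, rfl⟩

theorem hasUniqueDescent_nu : HasUniqueDescent sigmaGraph nu := by
  intro x y z hxy hxz hy hz
  obtain ⟨-, f, hf, rfl, rfl⟩ := sigmaGraph_adj.1 hxy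
  obtain ⟨hne, hz'⟩ := (sigmaGraph_adj_mk hf).1 hxz
  obtain ⟨h0, h2⟩ := lt_of_delta_neg hf.condsI_V (sub_neg.2 hy)
  have ascent : ∀ {g}, Admissible g → mk g = mk f → (g.h0 < g.h1 ∨ g.h2 < g.h1) →
      z ≠ mk (sigma g) := by
    rintro g hg hgf hh rfl
    have hq : g.q0 ≠ 0 := fun hq => hne (by rw [sigma_of_q0_eq_zero hq, hgf])
    rw [← hgf] at hz
    exact (delta_pos hg.condsI_V hq hh).not_ge (sub_nonpos.2 hz)
  rcases hz' with h | h | h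
  · exact h.symm
  · exact absurd h (ascent hf.psi1 (mk_psi1 hf) (.inl h2))
  · exact absurd h (ascent hf.psi1.psi1 ((mk_psi1 hf.psi1).trans (mk_psi1 hf)) (.inr h0))

theorem sigmaGraph_reachable (h : GEquiv f g) : sigmaGraph.Reachable (mk f) (mk g) := by
  induction h with
  | rel f _ h =>
    obtain ⟨hf, -, rfl | rfl | rfl | rfl⟩ := h
    · rw [mk_psi1 hf]
    · rw [mk_psi2 hf]
    · rw [mk_psi3 hf]
    · by_cases hne : mk f = mk (sigma f)
      · rw [← hne]
      · exact (sigmaGraph_adj.2 ⟨hne, f, hf, rfl, rfl⟩).reachable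
  | refl => rfl
  | symm _ _ _ ih => exact ih.symm
  | trans _ _ _ _ _ ih ih' => exact ih.trans ih'

end HClass

theorem gEquiv_sigma_iterate_psi1 {f : Tuple} (hf : Admissible f) (n : ℕ) :
    GEquiv f (sigma (psi1^[n] f)) := by
  induction n generalizing f with
  | zero => exact .rel _ _ ⟨hf, hf.sigma, .inr (.inr (.inr rfl))⟩
  | succ n ih => exact .trans _ _ _ (.rel _ _ ⟨hf, hf.psi1, .inl rfl⟩) (ih hf.psi1)

theorem delta_iterate_psi1 (f : Tuple) (n : ℕ) :
    delta (psi1^[n] f) = nu (sigma (psi1^[n] f)) - nu f := by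
  have hnu : nu (psi1^[n] f) = nu f := by
    induction n with
    | zero => rfl
    | succ n ih => rw [Function.iterate_succ_apply', nu_psi1, ih]
  rw [delta, hnu]

theorem stmt_17_general (f : Tuple) (hf : Admissible f) :
    ((∀ g, GEquiv f g → nu f ≤ nu g) ↔ ∀ i : Fin 3, 0 ≤ delta (psi1^[i.val] f)) ∧
    ((∀ g, GEquiv f g → ¬ HEquiv f g → nu f < nu g) ↔
      ∀ i : Fin 3, ¬ HEquiv f (sigma (psi1^[i.val] f)) → 0 < delta (psi1^[i.val] f)) := by
  simp only [delta_iterate_psi1, sub_nonneg, sub_pos, ← HClass.mk_eq_mk]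
  refine ⟨⟨fun h i => h _ (gEquiv_sigma_iterate_psi1 hf i), fun h g hg => ?_⟩,
    ⟨fun h i => h _ (gEquiv_sigma_iterate_psi1 hf i), fun h g hg hne => ?_⟩⟩
  · refine HClass.hasUniqueDescent_nu.le_of_reachable (fun y hy => ?_)
      (HClass.sigmaGraph_reachable hg)
    obtain ⟨-, i, rfl⟩ := HClass.sigmaGraph_adj_mk hf |>.1 hy |>.imp_right
      HClass.mem_sigmaNeighbors.1
    exact h i
  · refine HClass.hasUniqueDescent_nu.lt_of_reachable (fun y hy => ?_)
      (HClass.sigmaGraph_reachable hg) hne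
    obtain ⟨hfy, i, rfl⟩ := HClass.sigmaGraph_adj_mk hf |>.1 hy |>.imp_right
      HClass.mem_sigmaNeighbors.1
    exact h i hfy

/-- a canonical 6-tuple `f` is minimal iff `δ(ψ₁^i(f)) ≥ 0` for
`i = 0, 1, 2`, and is a root iff `δ(ψ₁^i(f)) > 0` whenever `σ(ψ₁^i(f))` is not
`H`-equivalent to `f`. -/
theorem stmt_17 (f : Tuple) (hf : Canonical f) :
    (Minimal f ↔ ∀ i : Fin 3, 0 ≤ delta (psi1^[i.val] f)) ∧
    (Root f ↔ ∀ i : Fin 3, ¬ HEquiv f (sigma (psi1^[i.val] f)) →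
      0 < delta (psi1^[i.val] f)) := by
  simpa only [Minimal, Root, hf, true_and] using stmt_17_general f hf.1

end GMN
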